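/- Let u be a word with maximum entry m, and suppose u contains a decreasing subsequence m, m-1, ..., m-k+1. If w ∈ C(u), then every entry in the first k rows of the insertion tableau P(w) is at most m. -/

import Mathlib

namespace Plactic

/-- Insert `x` into a weakly increasing row, returning the new row and the bumped entry. -/
def rowInsert (x : ℕ) : List ℕ → List ℕ × Option ℕ
  | [] => ([x], none)
  | y :: ys =>
    if x < y then (x :: ys, some y)
    else
      let p := rowInsert x ys
      (y :: p.1, p.2)

/-- RSK insertion of `x` into a tableau given as a list of rows. -/
def tInsert (x : ℕ) : List (List ℕ) → List (List ℕ)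
  | [] => [[x]]
  | r :: rs =>
    match rowInsert x r with
    | (r', none) => r' :: rs
    | (r', some y) => r' :: tInsert y rs

/-- The RSK insertion tableau of a word. -/
def P (w : List ℕ) : List (List ℕ) := w.foldl (fun t x => tInsert x t) []

/-- The `i`-th row (0-indexed) of the insertion tableau of `w`. -/
def row (w : List ℕ) (i : ℕ) : List ℕ := (P w).getD i []

/-- The `j`-th column (0-indexed) of a tableau, read top to bottom. -/
def col (T : List (List ℕ)) (j : ℕ) : List ℕ := T.filterMap (fun r => r[j]?)

/-- An elementary Knuth transposition. -/
inductive KStep : List ℕ → List ℕ → Prop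
  | k1 (x y : List ℕ) (a b c : ℕ) : a ≤ b → b < c →
      KStep (x ++ [a, c, b] ++ y) (x ++ [c, a, b] ++ y)
  | k2 (x y : List ℕ) (a b c : ℕ) : a < b → b ≤ c →
      KStep (x ++ [b, a, c] ++ y) (x ++ [b, c, a] ++ y)

/-- Knuth equivalence: the equivalence relation generated by Knuth transpositions. -/
def KEquiv : List ℕ → List ℕ → Prop := Relation.EqvGen KStep

/-- The centralizer of `u` in the plactic monoid. -/
def Cent (u : List ℕ) : Set (List ℕ) := {w | KEquiv (u ++ w) (w ++ u)}

end Plactic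

namespace Plactic

/-! ### Running a word through a single row -/

/-- The state of a row after inserting the letters of a word. -/
def rowOf : List ℕ → List ℕ → List ℕ
  | R, [] => R
  | R, x :: w => rowOf (rowInsert x R).1 w

/-- The word of entries bumped out of a row while inserting the letters of a word. -/
def bumped : List ℕ → List ℕ → List ℕ
  | _, [] => []
  | R, x :: w => (rowInsert x R).2.toList ++ bumped (rowInsert x R).1 w

theorem rowOf_append (R v u : List ℕ) : rowOf R (v ++ u) = rowOf (rowOf R v) u := by
  induction v generalizing R with
  | nil => rfl
  | cons x v ih => exact ih _

theorem bumped_append (R v u : List ℕ) :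
    bumped R (v ++ u) = bumped R v ++ bumped (rowOf R v) u := by
  induction v generalizing R with
  | nil => rfl
  | cons x v ih => simp [bumped, rowOf, ih]

theorem foldl_tInsert_cons (w r : List ℕ) (rs : List (List ℕ)) :
    w.foldl (fun t x => tInsert x t) (r :: rs) =
      rowOf r w :: (bumped r w).foldl (fun t x => tInsert x t) rs := by
  induction w generalizing r rs with
  | nil => rfl
  | cons x w ih =>
    rw [List.foldl_cons, tInsert]
    rcases h : rowInsert x r with ⟨r', _ | y⟩ <;> simp [ih, rowOf, bumped, h]

theorem P_cons (x : ℕ) (w : List ℕ) :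
    P (x :: w) = rowOf [] (x :: w) :: P (bumped [] (x :: w)) :=
  foldl_tInsert_cons w [x] []

theorem row_zero (w : List ℕ) : row w 0 = rowOf [] w := by
  cases w with
  | nil => rfl
  | cons x w => simp [row, P_cons]

theorem row_succ (w : List ℕ) (i : ℕ) : row w (i + 1) = row (bumped [] w) i := by
  cases w with
  | nil => simp [row, P, bumped]
  | cons x w => simp [row, P_cons]

/-! ### Basic properties of row insertion -/

theorem rowInsert_cons_lt {x y : ℕ} (h : x < y) (ys : List ℕ) :
    rowInsert x (y :: ys) = (x :: ys, some y) := by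
  simp [rowInsert, h]

theorem rowInsert_cons_le {x y : ℕ} (h : y ≤ x) (ys : List ℕ) :
    rowInsert x (y :: ys) = (y :: (rowInsert x ys).1, (rowInsert x ys).2) := by
  simp [rowInsert, not_lt.mpr h]

theorem rowInsert_perm (x : ℕ) (R : List ℕ) :
    ((rowInsert x R).2.toList ++ (rowInsert x R).1).Perm (x :: R) := by
  induction R with
  | nil => simp [rowInsert]
  | cons y ys ih =>
    rcases lt_or_ge x y with h | h
    · simpa [rowInsert_cons_lt h] using List.Perm.swap x y ys
    · rw [rowInsert_cons_le h]
      exact List.perm_middle.trans ((ih.cons y).trans (List.Perm.swap x y ys))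

theorem mem_rowInsert_self (x : ℕ) (R : List ℕ) : x ∈ (rowInsert x R).1 := by
  induction R with
  | nil => simp [rowInsert]
  | cons y ys ih =>
    rcases lt_or_ge x y with h | h
    · simp [rowInsert_cons_lt h]
    · simp [rowInsert_cons_le h, ih]

theorem lt_of_rowInsert_eq_some {x o : ℕ} {R : List ℕ} (h : (rowInsert x R).2 = some o) :
    x < o := by
  induction R with
  | nil => simp [rowInsert] at h
  | cons y ys ih =>
    rcases lt_or_ge x y with hy | hy
    · simp [rowInsert_cons_lt hy] at h; omega
    · exact ih (by simpa [rowInsert_cons_le hy] using h)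

theorem mem_of_mem_rowInsert {x z : ℕ} {R : List ℕ} (h : z ∈ (rowInsert x R).1) :
    z = x ∨ z ∈ R := by
  have := (rowInsert_perm x R).subset (List.mem_append_right _ h)
  simpa using this

theorem mem_rowInsert_or_eq_some {x q : ℕ} {R : List ℕ} (h : q ∈ R) :
    q ∈ (rowInsert x R).1 ∨ (rowInsert x R).2 = some q := by
  have := (rowInsert_perm x R).symm.subset (List.mem_cons_of_mem x h)
  simp only [List.mem_append, Option.mem_toList] at this
  tauto

theorem pairwise_rowInsert (x : ℕ) {R : List ℕ} (hR : R.Pairwise (· ≤ ·)) :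
    (rowInsert x R).1.Pairwise (· ≤ ·) := by
  induction R with
  | nil => simp [rowInsert]
  | cons y ys ih =>
    rw [List.pairwise_cons] at hR
    rcases lt_or_ge x y with h | h
    · rw [rowInsert_cons_lt h]
      exact List.pairwise_cons.mpr ⟨fun z hz => h.le.trans (hR.1 z hz), hR.2⟩
    · rw [rowInsert_cons_le h]
      refine List.pairwise_cons.mpr ⟨fun z hz => ?_, ih hR.2⟩
      rcases mem_of_mem_rowInsert hz with rfl | hz
      exacts [h, hR.1 z hz]

theorem pairwise_rowOf (w : List ℕ) {R : List ℕ} (hR : R.Pairwise (· ≤ ·)) :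
    (rowOf R w).Pairwise (· ≤ ·) := by
  induction w generalizing R with
  | nil => exact hR
  | cons x w ih => exact ih (pairwise_rowInsert x hR)

/-- Inserting `x` into a row with an entry exceeding `x` bumps the least such entry. -/
theorem exists_rowInsert_eq_some {x q : ℕ} {R : List ℕ} (hR : R.Pairwise (· ≤ ·))
    (hq : q ∈ R) (hx : x < q) : ∃ e, (rowInsert x R).2 = some e ∧ e ≤ q := by
  induction R with
  | nil => simp at hq
  | cons y ys ih =>
    rw [List.pairwise_cons] at hR
    rcases lt_or_ge x y with h | h
    · refine ⟨y, by rw [rowInsert_cons_lt h], ?_⟩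
      rcases List.mem_cons.mp hq with rfl | hq
      exacts [le_rfl, hR.1 q hq]
    · rw [rowInsert_cons_le h]
      rcases List.mem_cons.mp hq with rfl | hq
      exacts [absurd hx (not_lt.mpr h), ih hR.2 hq]

/-- Successive insertions of weakly increasing letters bump weakly increasing entries. -/
theorem le_of_rowInsert_rowInsert {b c p : ℕ} {R : List ℕ} (hR : R.Pairwise (· ≤ ·))
    (hbc : b ≤ c) (hp : (rowInsert c (rowInsert b R).1).2 = some p) :
    ∃ o, (rowInsert b R).2 = some o ∧ o ≤ p := by
  have hcp := lt_of_rowInsert_eq_some hp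
  have hmem := (rowInsert_perm c (rowInsert b R).1).subset
    (List.mem_append_left _ (Option.mem_toList.mpr hp))
  rcases List.mem_cons.mp hmem with h | h
  · omega
  rcases mem_of_mem_rowInsert h with h | h
  · omega
  · exact exists_rowInsert_eq_some hR h (by omega)

/-- After inserting `x`, the first entry of a row is at most `x` and at least any lower bound of
`x` and the old entries. -/
theorem exists_rowInsert_eq_cons (x : ℕ) (R : List ℕ) :
    ∃ h t, (rowInsert x R).1 = h :: t ∧ h ≤ x ∧ ∀ y, y ≤ x → (∀ z ∈ R, y ≤ z) → y ≤ h := by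
  cases R with
  | nil => exact ⟨x, [], rfl, le_rfl, fun y hy _ => hy⟩
  | cons y ys =>
    rcases lt_or_ge x y with h | h
    · exact ⟨x, ys, by rw [rowInsert_cons_lt h], le_rfl, fun y hy _ => hy⟩
    · exact ⟨y, _, by rw [rowInsert_cons_le h], h, fun z _ hz => hz y (by simp)⟩

/-! ### Knuth equivalence -/

theorem KStep.append {u v : List ℕ} (h : KStep u v) (s t : List ℕ) :
    KStep (s ++ u ++ t) (s ++ v ++ t) := by
  cases h with
  | k1 x y a b c h₁ h₂ => simpa using KStep.k1 (s ++ x) (y ++ t) a b c h₁ h₂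
  | k2 x y a b c h₁ h₂ => simpa using KStep.k2 (s ++ x) (y ++ t) a b c h₁ h₂

theorem KEquiv.refl (u : List ℕ) : KEquiv u u := Relation.EqvGen.refl u

theorem KEquiv.trans {u v w : List ℕ} (h : KEquiv u v) (h' : KEquiv v w) : KEquiv u w :=
  Relation.EqvGen.trans _ _ _ h h'

theorem KEquiv.symm {u v : List ℕ} (h : KEquiv u v) : KEquiv v u :=
  Relation.EqvGen.symm _ _ h

theorem KEquiv.append {u v : List ℕ} (h : KEquiv u v) (s t : List ℕ) :
    KEquiv (s ++ u ++ t) (s ++ v ++ t) := by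
  induction h with
  | rel _ _ h => exact .rel _ _ (h.append s t)
  | refl _ => exact .refl _
  | symm _ _ _ ih => exact KEquiv.symm ih
  | trans _ _ _ _ _ ih ih' => exact KEquiv.trans ih ih'

theorem KEquiv.append_left {u v : List ℕ} (h : KEquiv u v) (s : List ℕ) :
    KEquiv (s ++ u) (s ++ v) := by
  simpa using h.append s []

theorem KEquiv.append_right {u v : List ℕ} (h : KEquiv u v) (t : List ℕ) :
    KEquiv (u ++ t) (v ++ t) := by
  simpa using h.append [] t

theorem KEquiv.of_k1 {a b c : ℕ} (h : a ≤ b) (h' : b < c) (t : List ℕ) :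
    KEquiv (a :: c :: b :: t) (c :: a :: b :: t) :=
  .rel _ _ (by simpa using KStep.k1 [] t a b c h h')

theorem KEquiv.of_k2 {a b c : ℕ} (h : a < b) (h' : b ≤ c) (t : List ℕ) :
    KEquiv (b :: a :: c :: t) (b :: c :: a :: t) :=
  .rel _ _ (by simpa using KStep.k2 [] t a b c h h')

theorem kEquiv_cons_append_singleton {x y : ℕ} {ys : List ℕ} (hxy : x < y)
    (h : (y :: ys).Pairwise (· ≤ ·)) : KEquiv (y :: (ys ++ [x])) (y :: x :: ys) := by
  induction ys generalizing y with
  | nil => exact .refl _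
  | cons z zs ih =>
    have hyz : y ≤ z := List.rel_of_pairwise_cons h (by simp)
    have := (ih (hxy.trans_le hyz) h.of_cons).append_left [y]
    exact this.trans (KEquiv.of_k2 hxy hyz zs).symm

theorem kEquiv_rowInsert (x : ℕ) {R : List ℕ} (hR : R.Pairwise (· ≤ ·)) :
    KEquiv (R ++ [x]) ((rowInsert x R).2.toList ++ (rowInsert x R).1) := by
  induction R with
  | nil => exact .refl _
  | cons y ys ih =>
    rcases lt_or_ge x y with h | h
    · simpa [rowInsert_cons_lt h] using kEquiv_cons_append_singleton h hR
    · have hy := List.pairwise_cons.mp hR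
      have hcons := (ih hy.2).append_left [y]
      rw [rowInsert_cons_le h]
      obtain ⟨z, t, ht, hzx, hz⟩ := exists_rowInsert_eq_cons x ys
      rcases ho : (rowInsert x ys).2 with _ | o
      · simpa [ho] using hcons
      · have := lt_of_rowInsert_eq_some ho
        simp only [ho, ht, Option.toList_some, List.cons_append, List.nil_append] at hcons ⊢
        exact hcons.trans (.of_k1 (hz y h hy.1) (by omega) t)

/-- A word is Knuth equivalent to its bumped word followed by its first row. -/
theorem kEquiv_bumped_append_rowOf (w : List ℕ) {R : List ℕ} (hR : R.Pairwise (· ≤ ·)) :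
    KEquiv (R ++ w) (bumped R w ++ rowOf R w) := by
  induction w generalizing R with
  | nil => simpa [bumped, rowOf] using KEquiv.refl R
  | cons x w ih =>
    have h₁ := (kEquiv_rowInsert x hR).append_right w
    have h₂ := (ih (pairwise_rowInsert x hR)).append_left (rowInsert x R).2.toList
    simp only [List.append_assoc, List.singleton_append] at h₁
    simpa [bumped, rowOf] using h₁.trans h₂

/-! ### Knuth moves and row insertion -/

theorem rowOf_cons_of_le {y : ℕ} {w : List ℕ} (h : ∀ x ∈ w, y ≤ x) (ys : List ℕ) :
    rowOf (y :: ys) w = y :: rowOf ys w := by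
  induction w generalizing ys with
  | nil => rfl
  | cons x w ih =>
    simp only [rowOf, rowInsert_cons_le (h x (by simp))]
    exact ih (fun z hz => h z (by simp [hz])) _

theorem bumped_cons_of_le {y : ℕ} {w : List ℕ} (h : ∀ x ∈ w, y ≤ x) (ys : List ℕ) :
    bumped (y :: ys) w = bumped ys w := by
  induction w generalizing ys with
  | nil => rfl
  | cons x w ih =>
    simp only [bumped, rowInsert_cons_le (h x (by simp))]
    rw [ih (fun z hz => h z (by simp [hz])) _]

theorem rowInsert_k1 {a b c : ℕ} (hab : a ≤ b) (hbc : b < c) {R : List ℕ}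
    (hR : R.Pairwise (· ≤ ·)) :
    rowOf R [a, c, b] = rowOf R [c, a, b] ∧
      KEquiv (bumped R [a, c, b]) (bumped R [c, a, b]) := by
  induction R with
  | nil =>
    have hac : a ≤ c := by omega
    have hca : a < c := by omega
    simp [rowOf, bumped, rowInsert, not_lt.mpr hac, not_lt.mpr hab, hbc, hca, KEquiv.refl]
  | cons y ys ih =>
    have hy := List.pairwise_cons.mp hR
    rcases le_or_gt y a with hya | hay
    · have h₁ : ∀ x ∈ [a, c, b], y ≤ x := by simp; omega
      have h₂ : ∀ x ∈ [c, a, b], y ≤ x := by simp; omega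
      simpa only [rowOf_cons_of_le h₁, rowOf_cons_of_le h₂, bumped_cons_of_le h₁,
        bumped_cons_of_le h₂, List.cons.injEq, true_and] using ih hy.2
    have hac : a < c := by omega
    rcases lt_or_ge c y with hcy | hyc
    · cases ys with
      | nil =>
        simp [rowOf, bumped, rowInsert, hay, hcy, hac, hbc, not_lt.mpr hab, not_lt.mpr hac.le,
          KEquiv.refl]
      | cons z zs =>
        have hyz : y ≤ z := hy.1 z (by simp)
        have hcz : c < z := by omega
        have hbz : b < z := by omega
        simp only [rowOf, bumped, rowInsert_cons_lt hay, rowInsert_cons_lt hcy,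
          rowInsert_cons_lt hac, rowInsert_cons_le hac.le, rowInsert_cons_le hab,
          rowInsert_cons_lt hcz, rowInsert_cons_lt hbz, rowInsert_cons_lt hbc]
        exact ⟨trivial, (KEquiv.of_k2 hcy hyz []).symm⟩
    · simp only [rowOf, bumped, rowInsert_cons_lt hay, rowInsert_cons_le hyc,
        rowInsert_cons_le hac.le, rowInsert_cons_le hab, List.append_nil, true_and]
      rcases ho : (rowInsert c ys).2 with _ | o
      · exact .refl _
      have hco := lt_of_rowInsert_eq_some ho
      obtain ⟨e, he, hec⟩ := exists_rowInsert_eq_some (pairwise_rowInsert c hy.2)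
        (mem_rowInsert_self c ys) hbc
      have hye : y ≤ e := by
        have := (rowInsert_perm b (rowInsert c ys).1).subset
          (List.mem_append_left _ (Option.mem_toList.mpr he))
        have hbe := lt_of_rowInsert_eq_some he
        rcases List.mem_cons.mp this with h | h
        · omega
        rcases mem_of_mem_rowInsert h with h | h
        exacts [h ▸ hyc, hy.1 e h]
      rw [he]
      exact KEquiv.of_k1 hye (by omega) []

theorem rowInsert_k2 {a b c : ℕ} (hab : a < b) (hbc : b ≤ c) {R : List ℕ}
    (hR : R.Pairwise (· ≤ ·)) :
    rowOf R [b, a, c] = rowOf R [b, c, a] ∧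
      KEquiv (bumped R [b, a, c]) (bumped R [b, c, a]) := by
  have hac : a ≤ c := by omega
  induction R with
  | nil =>
    simp [rowOf, bumped, rowInsert, hab, not_lt.mpr hac, not_lt.mpr hbc, KEquiv.refl]
  | cons y ys ih =>
    have hy := List.pairwise_cons.mp hR
    rcases le_or_gt y a with hya | hay
    · have h₁ : ∀ x ∈ [b, a, c], y ≤ x := by simp; omega
      have h₂ : ∀ x ∈ [b, c, a], y ≤ x := by simp; omega
      simpa only [rowOf_cons_of_le h₁, rowOf_cons_of_le h₂, bumped_cons_of_le h₁,
        bumped_cons_of_le h₂, List.cons.injEq, true_and] using ih hy.2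
    rcases lt_or_ge b y with hby | hyb
    · simp only [rowOf, bumped, rowInsert_cons_lt hby, rowInsert_cons_lt hab,
        rowInsert_cons_le hbc, rowInsert_cons_le hac, List.append_nil, true_and]
      rcases ho : (rowInsert c ys).2 with _ | o
      · exact .refl _
      have hyo : y ≤ o := by
        have := (rowInsert_perm c ys).subset
          (List.mem_append_left _ (Option.mem_toList.mpr ho))
        have hco := lt_of_rowInsert_eq_some ho
        rcases List.mem_cons.mp this with h | h
        exacts [by omega, hy.1 o h]
      exact KEquiv.of_k2 hby hyo []
    · have hyc := hyb.trans hbc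
      simp only [rowOf, bumped, rowInsert_cons_lt hay, rowInsert_cons_le hyb,
        rowInsert_cons_le hyc, rowInsert_cons_le hac, List.append_nil, true_and]
      rcases hp : (rowInsert c (rowInsert b ys).1).2 with _ | p
      · exact .refl _
      obtain ⟨o, ho, hop⟩ := le_of_rowInsert_rowInsert hy.2 hbc hp
      have := lt_of_rowInsert_eq_some ho
      rw [ho]
      exact KEquiv.of_k2 (by omega) hop []

theorem KStep.rowOf_eq_and_bumped {u v : List ℕ} (h : KStep u v) {R : List ℕ}
    (hR : R.Pairwise (· ≤ ·)) : rowOf R u = rowOf R v ∧ KEquiv (bumped R u) (bumped R v) := by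
  cases h with
  | k1 x y a b c h₁ h₂ =>
    obtain ⟨hr, hb⟩ := rowInsert_k1 h₁ h₂ (pairwise_rowOf x hR)
    simp only [rowOf_append, bumped_append, hr]
    exact ⟨trivial, hb.append _ _⟩
  | k2 x y a b c h₁ h₂ =>
    obtain ⟨hr, hb⟩ := rowInsert_k2 h₁ h₂ (pairwise_rowOf x hR)
    simp only [rowOf_append, bumped_append, hr]
    exact ⟨trivial, hb.append _ _⟩

theorem KEquiv.rowOf_eq_and_bumped {u v : List ℕ} (h : KEquiv u v) {R : List ℕ}
    (hR : R.Pairwise (· ≤ ·)) : rowOf R u = rowOf R v ∧ KEquiv (bumped R u) (bumped R v) := by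
  induction h with
  | rel _ _ h => exact h.rowOf_eq_and_bumped hR
  | refl _ => exact ⟨rfl, .refl _⟩
  | symm _ _ _ ih => exact ⟨ih.1.symm, ih.2.symm⟩
  | trans _ _ _ _ _ ih ih' => exact ⟨ih.1.trans ih'.1, ih.2.trans ih'.2⟩

/-! ### Counting large entries in the first rows -/

/-- The number of letters of a word exceeding `m`. -/
def large (m : ℕ) (w : List ℕ) : ℕ := w.countP (fun x => m < x)

theorem large_append (m : ℕ) (u v : List ℕ) : large m (u ++ v) = large m u + large m v :=
  List.countP_append

theorem large_pos {m : ℕ} {w : List ℕ} : 0 < large m w ↔ ∃ x ∈ w, m < x := by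
  simp [large, List.countP_pos_iff]

/-- The number of entries exceeding `m` in the first `k` rows of `P w`. -/
def largeRows (m : ℕ) : ℕ → List ℕ → ℕ
  | 0, _ => 0
  | k + 1, w => large m (rowOf [] w) + largeRows m k (bumped [] w)

theorem le_of_largeRows_eq_zero {m k : ℕ} {w : List ℕ} (h : largeRows m k w = 0) :
    ∀ i < k, ∀ x ∈ row w i, x ≤ m := by
  induction k generalizing w with
  | zero => intro i hi; omega
  | succ k ih =>
    simp only [largeRows, Nat.add_eq_zero_iff] at h
    rintro (_ | i) hi x hx
    · by_contra! hmx
      rw [row_zero] at hx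
      have := large_pos.mpr ⟨x, hx, hmx⟩
      omega
    · rw [row_succ] at hx
      exact ih h.2 i (by omega) x hx

theorem KEquiv.largeRows_eq (m k : ℕ) {u v : List ℕ} (h : KEquiv u v) :
    largeRows m k u = largeRows m k v := by
  induction k generalizing u v with
  | zero => rfl
  | succ k ih =>
    obtain ⟨hr, hb⟩ := h.rowOf_eq_and_bumped List.Pairwise.nil
    rw [largeRows, largeRows, hr, ih hb]

theorem large_bumped_add_large_rowOf (m : ℕ) (R w : List ℕ) :
    large m (bumped R w) + large m (rowOf R w) = large m R + large m w := by
  induction w generalizing R with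
  | nil => simp [bumped, rowOf, large]
  | cons x w ih =>
    have h₁ : large m ((rowInsert x R).2.toList ++ (rowInsert x R).1) = large m ([x] ++ R) :=
      (rowInsert_perm x R).countP_eq _
    have h₂ := ih (rowInsert x R).1
    have h₃ := large_append m [x] w
    rw [List.singleton_append] at h₃
    simp only [bumped, rowOf, large_append] at h₁ h₂ ⊢
    omega

theorem bumped_nil_of_pairwise {w : List ℕ} (hw : w.Pairwise (· ≤ ·)) : bumped [] w = [] := by
  induction w with
  | nil => rfl
  | cons x w ih =>
    rw [List.pairwise_cons] at hw
    simp [bumped, rowInsert, bumped_cons_of_le hw.1, ih hw.2]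

/-- Inserting a weakly increasing word into a row bumps a subword of that row. -/
theorem bumped_sublist {w : List ℕ} (hw : w.Pairwise (· ≤ ·)) (R : List ℕ) :
    (bumped R w).Sublist R := by
  induction R generalizing w with
  | nil => rw [bumped_nil_of_pairwise hw]
  | cons y ys ih =>
    cases w with
    | nil => simp [bumped]
    | cons x w =>
      have hx := List.pairwise_cons.mp hw
      rcases lt_or_ge x y with h | h
      · simpa [bumped, rowInsert_cons_lt h, bumped_cons_of_le hx.1] using ih hx.2
      · rw [bumped_cons_of_le (by
          intro z hz
          rcases List.mem_cons.mp hz with rfl | hz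
          exacts [h, h.trans (hx.1 z hz)])]
        exact (ih hw).cons y

theorem large_add_largeRows_le (m k : ℕ) (v : List ℕ) {w : List ℕ}
    (hw : w.Pairwise (· ≤ ·)) :
    large m w + largeRows m k v ≤ largeRows m (k + 1) (v ++ w) := by
  induction k generalizing v w with
  | zero =>
    have h₁ := large_bumped_add_large_rowOf m (rowOf [] v) w
    have h₂ : large m (bumped (rowOf [] v) w) ≤ large m (rowOf [] v) :=
      (bumped_sublist hw _).countP_le
    simp only [largeRows, rowOf_append]
    omega
  | succ k ih =>
    have h₁ := large_bumped_add_large_rowOf m (rowOf [] v) w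
    have h₂ := ih (bumped [] v)
      ((pairwise_rowOf v List.Pairwise.nil).sublist (bumped_sublist hw _))
    rw [largeRows, largeRows, rowOf_append, bumped_append]
    omega

/-- Prepending letters does not decrease the number of large entries in the first rows. -/
theorem largeRows_le_append_left (m k : ℕ) (u w : List ℕ) :
    largeRows m k w ≤ largeRows m k (u ++ w) := by
  induction k generalizing w with
  | zero => exact le_rfl
  | succ k ih =>
    have hw := (kEquiv_bumped_append_rowOf w List.Pairwise.nil).append_left u
    rw [List.nil_append, ← List.append_assoc] at hw
    have h₁ := large_add_largeRows_le m k (u ++ bumped [] w)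
      (pairwise_rowOf w List.Pairwise.nil)
    have h₂ := ih (bumped [] w)
    rw [hw.largeRows_eq, largeRows]
    omega

/-! ### Appending a word with a long decreasing subword -/

/-- The decreasing word `m, m - 1, …, m - k + 1`. -/
def desc (m : ℕ) : ℕ → List ℕ
  | 0 => []
  | k + 1 => m :: desc (m - 1) k

theorem map_range_eq_desc (m k : ℕ) : (List.range k).map (fun i => m - i) = desc m k := by
  induction k generalizing m with
  | zero => rfl
  | succ k ih =>
    rw [List.range_succ_eq_map, List.map_cons, List.map_map, desc, ← ih (m - 1)]
    simp only [Nat.sub_zero, List.cons.injEq, true_and]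
    exact List.map_congr_left fun i _ => by simp only [Function.comp]; omega

theorem desc_bumped {u : List ℕ} {d k : ℕ} (hk : k ≤ d) (hu : (desc d (k + 1)).Sublist u)
    {R : List ℕ} (hR : R.Pairwise (· ≤ ·)) :
    (desc d k).Sublist (bumped R u) ∧
      ∀ q ∈ R, d < q → ∃ e, d < e ∧ e ≤ q ∧ (e :: desc d k).Sublist (bumped R u) := by
  induction u generalizing d k R with
  | nil => simp [desc] at hu
  | cons x u ih =>
    have hR' := pairwise_rowInsert x hR
    rw [desc] at hu
    cases hu with
    | cons _ hu =>
      obtain ⟨h₁, h₂⟩ := ih hk hu hR'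
      refine ⟨h₁.trans (List.sublist_append_right _ _), fun q hq hdq => ?_⟩
      rcases mem_rowInsert_or_eq_some (x := x) hq with hq' | hq'
      · obtain ⟨e, hde, heq, he⟩ := h₂ q hq' hdq
        exact ⟨e, hde, heq, he.trans (List.sublist_append_right _ _)⟩
      · exact ⟨q, hdq, le_rfl, by simpa [bumped, hq'] using h₁⟩
    | cons_cons _ hu =>
      have htail : (desc x k).Sublist (bumped (rowInsert x R).1 u) := by
        cases k with
        | zero => simp [desc]
        | succ k =>
          obtain ⟨e, hde, hed, he⟩ := (ih (d := x - 1) (k := k) (by omega) hu hR').2 x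
            (mem_rowInsert_self x R) (by omega)
          obtain rfl : e = x := by omega
          exact he
      refine ⟨htail.trans (List.sublist_append_right _ _), fun q hq hdq => ?_⟩
      obtain ⟨e, he, heq⟩ := exists_rowInsert_eq_some hR hq hdq
      exact ⟨e, lt_of_rowInsert_eq_some he, heq, by simpa [bumped, he] using htail⟩

theorem desc_bumped_of_cons {u : List ℕ} {d k p : ℕ} (hk : k ≤ d) (hp : d < p)
    (hu : (p :: desc d (k + 1)).Sublist u) {R : List ℕ} (hR : R.Pairwise (· ≤ ·)) :
    ∃ e, d < e ∧ (e :: desc d k).Sublist (bumped R u) := by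
  induction u generalizing R with
  | nil => simp at hu
  | cons x u ih =>
    have hR' := pairwise_rowInsert x hR
    cases hu with
    | cons _ hu =>
      obtain ⟨e, hde, he⟩ := ih hu hR'
      exact ⟨e, hde, he.trans (List.sublist_append_right _ _)⟩
    | cons_cons _ hu =>
      obtain ⟨e, hde, -, he⟩ := (desc_bumped hk hu hR').2 p (mem_rowInsert_self p R) hp
      exact ⟨e, hde, he.trans (List.sublist_append_right _ _)⟩

theorem largeRows_append_lt_of_cons {m k p : ℕ} (hk : k ≤ m) (hp : m < p) {u : List ℕ}
    (hu : (p :: desc m k).Sublist u) (v : List ℕ) :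
    largeRows m k (v ++ u) < largeRows m k v + large m u := by
  induction k generalizing p u v with
  | zero =>
    have := large_pos.mpr ⟨p, hu.subset (by simp), hp⟩
    simpa [largeRows] using this
  | succ k ih =>
    obtain ⟨e, hme, he⟩ := desc_bumped_of_cons (by omega) hp hu
      (pairwise_rowOf v List.Pairwise.nil)
    have h₁ := ih (by omega) hme he (bumped [] v)
    have h₂ := large_bumped_add_large_rowOf m (rowOf [] v) u
    rw [largeRows, largeRows, rowOf_append, bumped_append]
    omega

/-- Appending a word containing `m, m - 1, …, m - k + 1` in this order pushes a large entry out
of the first `k` rows. -/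
theorem largeRows_append_lt {m k : ℕ} (hk : k ≤ m) {u : List ℕ} (hu : (desc m k).Sublist u)
    {v : List ℕ} (hv : 0 < largeRows m k v) :
    largeRows m k (v ++ u) < largeRows m k v + large m u := by
  induction k generalizing u v with
  | zero => simp [largeRows] at hv
  | succ k ih =>
    obtain ⟨h₁, h₂⟩ := desc_bumped (by omega) hu (pairwise_rowOf v List.Pairwise.nil)
    have h₃ := large_bumped_add_large_rowOf m (rowOf [] v) u
    have h₄ : largeRows m k (bumped [] v ++ bumped (rowOf [] v) u) <
        largeRows m k (bumped [] v) + large m (bumped (rowOf [] v) u) := by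
      rcases Nat.eq_zero_or_pos (large m (rowOf [] v)) with h | h
      · exact ih (by omega) h₁ (by rw [largeRows] at hv; omega)
      · obtain ⟨q, hq, hmq⟩ := large_pos.mp h
        obtain ⟨e, hme, -, he⟩ := h₂ q hq hmq
        exact largeRows_append_lt_of_cons (by omega) hme he _
    rw [largeRows, largeRows, rowOf_append, bumped_append]
    omega

theorem le_foldr_max {u : List ℕ} {x : ℕ} (hx : x ∈ u) : x ≤ u.foldr max 0 := by
  induction u with
  | nil => simp at hx
  | cons y u ih =>
    rw [List.foldr_cons]
    rcases List.mem_cons.mp hx with rfl | hx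
    exacts [le_max_left _ _, (ih hx).trans (le_max_right _ _)]

end Plactic

open Plactic in
theorem stmt_2 (u w : List ℕ) (hu : ∀ x ∈ u, 0 < x) (hw : ∀ x ∈ w, 0 < x)
    (m k : ℕ) (hm : m = u.foldr max 0)
    (hsub : ((List.range k).map (fun i => m - i)).Sublist u)
    (hcent : w ∈ Cent u) :
    ∀ i < k, ∀ x ∈ row w i, x ≤ m := by
  have hk : k ≤ m := by
    by_contra! hmk
    have := hu (m - m) (hsub.subset (List.mem_map.mpr ⟨m, List.mem_range.mpr hmk, rfl⟩))
    omega
  have hlarge : large m u = 0 := by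
    by_contra! h
    obtain ⟨x, hx, hmx⟩ := large_pos.mp (Nat.pos_of_ne_zero h)
    have := le_foldr_max hx
    omega
  rw [map_range_eq_desc] at hsub
  apply le_of_largeRows_eq_zero
  by_contra! h
  have h₁ := largeRows_append_lt hk hsub (Nat.pos_of_ne_zero h)
  have h₂ := largeRows_le_append_left m k u w
  rw [KEquiv.largeRows_eq m k hcent] at h₂
  omega
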